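/- arXiv:2207.09317 — 9 statements merged into one kernel-verified Lean document; each statement's English description precedes it below -/
import Mathlib

section
/- Let B be a real Banach space with dual B* and let C be a nonempty subset of B. The generalized projection π_C is monotone on B*: for all φ₁, φ₂ ∈ B*, if u₁ ∈ π_C(φ₁) and u₂ ∈ π_C(φ₂), then ⟨φ₁ − φ₂, u₁ − u₂⟩ ≥ 0. -/
open Set Filter

noncomputable section

/-- The normalized duality map `J x = {φ : ⟨φ,x⟩ = ‖x‖² and ‖φ‖ = ‖x‖}`. -/
def dualityMap {B : Type*} [NormedAddCommGroup B] [NormedSpace ℝ B] (x : B) :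
    Set (B →L[ℝ] ℝ) :=
  {φ | φ x = ‖x‖ ^ 2 ∧ ‖φ‖ = ‖x‖}

/-- The Lyapunov functional `V(φ,x) = ‖φ‖² - 2⟨φ,x⟩ + ‖x‖²`. -/
def lyapV {B : Type*} [NormedAddCommGroup B] [NormedSpace ℝ B] (φ : B →L[ℝ] ℝ) (x : B) : ℝ :=
  ‖φ‖ ^ 2 - 2 * φ x + ‖x‖ ^ 2

/-- The generalized projection: the set of minimizers of `V(φ, ·)` over `C`. -/
def genProj {B : Type*} [NormedAddCommGroup B] [NormedSpace ℝ B] (C : Set B)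
    (φ : B →L[ℝ] ℝ) : Set B :=
  {u | u ∈ C ∧ ∀ y ∈ C, lyapV φ u ≤ lyapV φ y}

/-- The generalized metric projection `Π_C x = ⋃_{jx ∈ J x} π_C (jx)`. -/
def genMetricProj {B : Type*} [NormedAddCommGroup B] [NormedSpace ℝ B] (C : Set B) (x : B) :
    Set B :=
  ⋃ φ ∈ dualityMap x, genProj C φ

/-- The metric projection: the set of nearest points to `x` in `C`. -/
def metricProj {B : Type*} [NormedAddCommGroup B] [NormedSpace ℝ B] (C : Set B) (x : B) :
    Set B :=
  {u | u ∈ C ∧ ∀ y ∈ C, ‖x - u‖ ≤ ‖x - y‖}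

/-- The set of generalized identical points of `x`. -/
def genIdentical {B : Type*} [NormedAddCommGroup B] [NormedSpace ℝ B] (x : B) : Set B :=
  {y | (dualityMap x ∩ dualityMap y).Nonempty}

theorem statement_2 {B : Type*} [NormedAddCommGroup B] [NormedSpace ℝ B] [CompleteSpace B]
    (C : Set B) (hC : C.Nonempty) (φ₁ φ₂ : B →L[ℝ] ℝ) (u₁ u₂ : B)
    (h₁ : u₁ ∈ genProj C φ₁) (h₂ : u₂ ∈ genProj C φ₂) :
    0 ≤ (φ₁ - φ₂) (u₁ - u₂) := by
  have h₁₂ := h₁.2 u₂ h₂.1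
  have h₂₁ := h₂.2 u₁ h₁.1
  simp only [lyapV] at h₁₂ h₂₁
  simp only [sub_apply, map_sub]
  linarith
end
end

section
/- Let B be a real Banach space with dual B* and let C ⊆ B be nonempty, closed, and convex. Then for every φ ∈ B*, if the set π_C(φ) is nonempty, it is closed, convex, and bounded. -/
open Set Filter

noncomputable section

section Lyapunov

variable {B : Type*} [NormedAddCommGroup B] [NormedSpace ℝ B]

theorem continuous_lyapV (φ : B →L[ℝ] ℝ) : Continuous (lyapV φ) := by
  unfold lyapV
  fun_prop

theorem convexOn_lyapV (φ : B →L[ℝ] ℝ) : ConvexOn ℝ univ (lyapV φ) := by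
  have hsq : ConvexOn ℝ univ fun x : B => ‖x‖ ^ 2 :=
    convexOn_univ_norm.pow (fun _ _ => norm_nonneg _) 2
  have hlin : ConvexOn ℝ univ fun x : B => ((-2 : ℝ) • φ) x :=
    ((-2 : ℝ) • φ).toLinearMap.convexOn convex_univ
  have hsum := (hlin.add hsq).add_const (‖φ‖ ^ 2)
  refine hsum.congr fun x _ => ?_
  simp only [lyapV, Pi.add_apply, smul_apply, smul_eq_mul]
  ring

theorem sq_norm_sub_norm_le_lyapV (φ : B →L[ℝ] ℝ) (x : B) :
    (‖x‖ - ‖φ‖) ^ 2 ≤ lyapV φ x := by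
  have h : φ x ≤ ‖φ‖ * ‖x‖ := (le_abs_self _).trans (φ.le_opNorm x)
  unfold lyapV
  linarith [sub_sq ‖x‖ ‖φ‖]

/-- If the generalized projection contains `u`, it is the sublevel set of `V(φ, ·)` in `C` at
height `V(φ, u)`. -/
theorem genProj_eq_of_mem {C : Set B} {φ : B →L[ℝ] ℝ} {u : B} (hu : u ∈ genProj C φ) :
    genProj C φ = C ∩ {x | lyapV φ x ≤ lyapV φ u} :=
  Subset.antisymm (fun _ hx => ⟨hx.1, hx.2 u hu.1⟩)
    fun _ hx => ⟨hx.1, fun y hy => hx.2.trans (hu.2 y hy)⟩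

theorem isBounded_lyapV_le (φ : B →L[ℝ] ℝ) (r : ℝ) :
    Bornology.IsBounded {x | lyapV φ x ≤ r} := by
  refine isBounded_iff_forall_norm_le.2 ⟨‖φ‖ + √r, fun x hx => ?_⟩
  linarith [Real.le_sqrt_of_sq_le ((sq_norm_sub_norm_le_lyapV φ x).trans hx)]

end Lyapunov

theorem statement_3 {B : Type*} [NormedAddCommGroup B] [NormedSpace ℝ B] [CompleteSpace B]
    (C : Set B) (hC : C.Nonempty) (hclosed : IsClosed C) (hconv : Convex ℝ C)
    (φ : B →L[ℝ] ℝ) (hne : (genProj C φ).Nonempty) :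
    IsClosed (genProj C φ) ∧ Convex ℝ (genProj C φ) ∧
      Bornology.IsBounded (genProj C φ) := by
  obtain ⟨u, hu⟩ := hne
  rw [genProj_eq_of_mem hu]
  refine ⟨hclosed.inter (isClosed_le (continuous_lyapV φ) continuous_const),
    hconv.inter ?_, (isBounded_lyapV_le φ _).subset inter_subset_right⟩
  simpa using (convexOn_lyapV φ).convex_le (lyapV φ u)
end
end

section
/- Let B be a real Banach space with dual B* and let C be a nonempty closed subset of B. Let φ ∈ B* and z ∈ C. If there exists jz ∈ J(z) such that ⟨φ − jz, z − y⟩ ≥ 0 for all y ∈ C, then z ∈ π_C(φ). -/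
open Set Filter

noncomputable section

theorem statement_5 {B : Type*} [NormedAddCommGroup B] [NormedSpace ℝ B] [CompleteSpace B]
    (C : Set B) (hC : C.Nonempty) (hclosed : IsClosed C)
    (φ : B →L[ℝ] ℝ) (z : B) (hz : z ∈ C)
    (h : ∃ jz ∈ dualityMap z, ∀ y ∈ C, 0 ≤ (φ - jz) (z - y)) :
    z ∈ genProj C φ := by
  obtain ⟨jz, ⟨hjz, hnorm⟩, hvar⟩ := h
  refine ⟨hz, fun y hy => ?_⟩
  have hle : jz y ≤ ‖z‖ * ‖y‖ := hnorm ▸ (le_abs_self _).trans (jz.le_opNorm y)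
  have hy' := hvar y hy
  simp only [sub_apply, map_sub, hjz] at hy'
  unfold lyapV
  nlinarith [sq_nonneg (‖z‖ - ‖y‖)]
end
end

section
/- In ℓ¹, for each positive integer n let eₙ be the n-th standard unit vector and set C equal to the closed convex hull of { ((n+1)/n)·eₙ : n = 1, 2, … }. Then every y ∈ C satisfies ‖y‖ > 1, while inf_{y ∈ C} ‖y‖ = 1; in particular, the norm attains no minimum on C (so Π_C(0) = ∅ and C is not generalized proximal). -/
open scoped ENNReal

noncomputable section

/-- The norm of `ℓ¹` is the sum of the absolute values of the coordinates. -/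
theorem hasSum_norm_lp_one {ι : Type*} (y : lp (fun _ : ι => ℝ) 1) :
    HasSum (fun i => ‖y i‖) ‖y‖ := by
  simpa using lp.hasSum_norm (p := 1) (by simp) y

theorem summable_weight_mul {ι : Type*} {w : ι → ℝ} (hw : ∀ i, |w i| ≤ 1)
    (y : lp (fun _ : ι => ℝ) 1) : Summable fun i => w i * y i := by
  refine Summable.of_norm_bounded (hasSum_norm_lp_one y).summable fun i => ?_
  rw [norm_mul]
  exact mul_le_of_le_one_left (norm_nonneg _) (hw i)

/-- The continuous functional `y ↦ ∑ wᵢ yᵢ` on `ℓ¹` given by weights bounded by `1`. -/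
def weightedSum {ι : Type*} (w : ι → ℝ) (hw : ∀ i, |w i| ≤ 1) :
    lp (fun _ : ι => ℝ) 1 →L[ℝ] ℝ :=
  LinearMap.mkContinuous
    { toFun := fun y => ∑' i, w i * y i
      map_add' := fun x y => by
        rw [← (summable_weight_mul hw x).tsum_add (summable_weight_mul hw y)]
        simp [mul_add]
      map_smul' := fun c y => by
        rw [RingHom.id_apply, smul_eq_mul, ← tsum_mul_left]
        simp [mul_left_comm] }
    1 fun y => by
      rw [one_mul]
      refine tsum_of_norm_bounded (hasSum_norm_lp_one y) fun i => ?_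
      rw [norm_mul]
      exact mul_le_of_le_one_left (norm_nonneg _) (hw i)

theorem weightedSum_apply {ι : Type*} {w : ι → ℝ} (hw : ∀ i, |w i| ≤ 1)
    (y : lp (fun _ : ι => ℝ) 1) : weightedSum w hw y = ∑' i, w i * y i := rfl

theorem weightedSum_single {ι : Type*} [DecidableEq ι] {w : ι → ℝ} (hw : ∀ i, |w i| ≤ 1)
    (i : ι) : weightedSum w hw (lp.single 1 i (1 : ℝ)) = w i := by
  rw [weightedSum_apply, tsum_eq_single i]
  · simp
  · intro j hj
    simp [hj]

/-- If all weights are strictly less than `1` in absolute value, the functional does not attain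
its norm. -/
theorem weightedSum_lt_norm {ι : Type*} {w : ι → ℝ} (hw : ∀ i, |w i| ≤ 1)
    (hlt : ∀ i, |w i| < 1) {y : lp (fun _ : ι => ℝ) 1} (hy : y ≠ 0) :
    weightedSum w hw y < ‖y‖ := by
  obtain ⟨i, hi⟩ : ∃ i, y i ≠ 0 := by
    by_contra! h
    exact hy (lp.ext (funext h))
  rw [weightedSum_apply, ← (hasSum_norm_lp_one y).tsum_eq]
  have key (j : ι) : w j * y j ≤ |w j| * ‖y j‖ := by
    rw [Real.norm_eq_abs, ← abs_mul]
    exact le_abs_self _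
  refine Summable.tsum_lt_tsum (i := i)
    (fun j => (key j).trans (mul_le_of_le_one_left (norm_nonneg _) (hw j)))
    ((key i).trans_lt (mul_lt_of_lt_one_left (norm_pos_iff.mpr hi) (hlt i)))
    (summable_weight_mul hw y) (hasSum_norm_lp_one y).summable

/-- In `ℓ¹`, with `C` the closed convex hull of `{((n+1)/n)·eₙ : n ≥ 1}`,
every `y ∈ C` has `‖y‖ > 1`, yet `inf {‖y‖ : y ∈ C} = 1`; in particular the norm
attains no minimum on `C` (so `Π_C(0) = ∅`, i.e. `C` is not generalized proximal). -/
theorem statement_7 :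
    let C : Set (lp (fun _ : ℕ+ => ℝ) 1) :=
      closure (convexHull ℝ
        {v | ∃ n : ℕ+, v = (((n : ℝ) + 1) / (n : ℝ)) • lp.single 1 n (1 : ℝ)})
    (∀ y ∈ C, 1 < ‖y‖) ∧ IsGLB ((fun y => ‖y‖) '' C) 1 ∧
      ¬∃ u ∈ C, ∀ y ∈ C, ‖u‖ ≤ ‖y‖ := by
  intro C
  have hpos (n : ℕ+) : (0 : ℝ) < n := by exact_mod_cast n.pos
  have hlt (n : ℕ+) : |(n : ℝ) / (n + 1)| < 1 := by
    have := hpos n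
    rw [abs_of_pos (by positivity), div_lt_one (by positivity)]
    linarith
  let f := weightedSum (fun n : ℕ+ => (n : ℝ) / (n + 1)) fun n => (hlt n).le
  have hf : ∀ y ∈ C, f y = 1 := by
    have hsub : C ⊆ f ⁻¹' {1} := by
      refine closure_minimal (convexHull_min ?_ ?_) (isClosed_singleton.preimage f.continuous)
      · rintro _ ⟨n, rfl⟩
        have := hpos n
        change f _ = 1
        rw [map_smul, weightedSum_single, smul_eq_mul]
        field_simp
      · exact (convex_singleton (1 : ℝ)).linear_preimage f.toLinearMap
    exact hsub
  have hgt : ∀ y ∈ C, 1 < ‖y‖ := by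
    intro y hy
    rw [← hf y hy]
    refine weightedSum_lt_norm _ hlt ?_
    rintro rfl
    simpa using hf 0 hy
  have hglb : IsGLB ((fun y => ‖y‖) '' C) 1 := by
    refine ⟨?_, fun b hb => ?_⟩
    · rintro _ ⟨y, hy, rfl⟩
      exact (hgt y hy).le
    · refine le_of_forall_pos_le_add fun ε hε => ?_
      obtain ⟨k, hk⟩ := exists_nat_one_div_lt hε
      let n : ℕ+ := k.succPNat
      have hn : (n : ℝ) = k + 1 := by simp [n]
      have hmem : (((n : ℝ) + 1) / (n : ℝ)) • lp.single 1 n (1 : ℝ) ∈ C :=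
        subset_closure (subset_convexHull ℝ _ ⟨n, rfl⟩)
      have hle := hb ⟨_, hmem, rfl⟩
      have hnorm : ‖(((n : ℝ) + 1) / (n : ℝ)) •
          (lp.single 1 n (1 : ℝ) : lp (fun _ : ℕ+ => ℝ) 1)‖ = 1 + 1 / (n : ℝ) := by
        have := hpos n
        rw [norm_smul, lp.norm_single (by simp), norm_one, mul_one,
          Real.norm_of_nonneg (by positivity)]
        field_simp
      rw [← hn] at hk
      exact (hle.trans_eq hnorm).trans (by linarith)
  refine ⟨hgt, hglb, ?_⟩
  rintro ⟨u, hu, hmin⟩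
  refine (hgt u hu).not_ge (hglb.2 ?_)
  rintro _ ⟨y, hy, rfl⟩
  exact hmin y hy
end
end

section
/- Let B be a real Banach space and let C be a nonempty subset of B. Then Π_C is monotone (d-accretive): for any x, y ∈ B, any jx ∈ J(x) and jy ∈ J(y), and any u ∈ π_C(jx) and v ∈ π_C(jy), one has ⟨jx − jy, u − v⟩ ≥ 0. -/
open Set Filter

noncomputable section

theorem statement_10 {B : Type*} [NormedAddCommGroup B] [NormedSpace ℝ B] [CompleteSpace B]
    (C : Set B) (hC : C.Nonempty) (x y : B) (jx jy : B →L[ℝ] ℝ)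
    (hjx : jx ∈ dualityMap x) (hjy : jy ∈ dualityMap y)
    (u v : B) (hu : u ∈ genProj C jx) (hv : v ∈ genProj C jy) :
    0 ≤ (jx - jy) (u - v) := by
  have huv := hu.2 v hv.1
  have hvu := hv.2 u hu.1
  simp only [lyapV] at huv hvu
  simp only [sub_apply, map_sub]
  linarith
end
end

section
/- Let B be a real Banach space and let C be a nonempty subset of B. Let x ∈ B, jx ∈ J(x), and z ∈ C. If there exists jz ∈ J(z) such that ⟨jx − jz, z − y⟩ ≥ 0 for all y ∈ C, then z ∈ π_C(jx), and hence z ∈ Π_C(x). -/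
open Set Filter

noncomputable section

theorem lyapV_nonneg {B : Type*} [NormedAddCommGroup B] [NormedSpace ℝ B]
    (φ : B →L[ℝ] ℝ) (x : B) : 0 ≤ lyapV φ x := by
  have hle : φ x ≤ ‖φ‖ * ‖x‖ := (le_abs_self _).trans (φ.le_opNorm x)
  unfold lyapV
  nlinarith [sq_nonneg (‖φ‖ - ‖x‖)]

theorem statement_11 {B : Type*} [NormedAddCommGroup B] [NormedSpace ℝ B] [CompleteSpace B]
    (C : Set B) (hC : C.Nonempty) (x : B) (jx : B →L[ℝ] ℝ) (hjx : jx ∈ dualityMap x)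
    (z : B) (hz : z ∈ C)
    (h : ∃ jz ∈ dualityMap z, ∀ y ∈ C, 0 ≤ (jx - jz) (z - y)) :
    z ∈ genProj C jx ∧ z ∈ genMetricProj C x := by
  obtain ⟨jz, hjz, hvar⟩ := h
  have hmem : z ∈ genProj C jx := by
    refine ⟨hz, fun y hy => ?_⟩
    have hzy := lyapV_nonneg jz y
    have hyC := hvar y hy
    simp only [lyapV, sub_apply, map_sub, hjz.1, hjz.2] at *
    linarith
  exact ⟨hmem, mem_biUnion hjx hmem⟩
end
end

section
/- A real Banach space B is strictly convex if and only if 𝓙(x) = {x} for every x ∈ B, where 𝓙(x) = {y ∈ B : J(x) ∩ J(y) ≠ ∅} is the set of generalized identical points of x. -/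
open Set Filter

noncomputable section

/-- Every vector has a norming functional of the same norm (Hahn–Banach). -/
theorem dualityMap_nonempty {B : Type*} [NormedAddCommGroup B] [NormedSpace ℝ B] (x : B) :
    (dualityMap x).Nonempty := by
  by_cases hx : ‖x‖ = 0
  · exact ⟨0, by simp [hx], by simp [hx]⟩
  · obtain ⟨g, hg, hgx⟩ := exists_dual_vector ℝ x hx
    have hgx' : g x = ‖x‖ := hgx
    exact ⟨‖x‖ • g, by simp [hgx', sq], by simp [norm_smul, hg]⟩

theorem norm_add_eq_of_mem_dualityMap {B : Type*} [NormedAddCommGroup B] [NormedSpace ℝ B]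
    {x y : B} {φ : B →L[ℝ] ℝ} (hx : φ ∈ dualityMap x) (hy : φ ∈ dualityMap y) :
    ‖x + y‖ = ‖x‖ + ‖y‖ := by
  obtain ⟨hφx, hnx⟩ := hx
  obtain ⟨hφy, hny⟩ := hy
  have hxy : ‖x‖ = ‖y‖ := hnx.symm.trans hny
  refine le_antisymm (norm_add_le x y) ?_
  rcases (norm_nonneg x).eq_or_lt with h0 | hpos
  · rw [← hxy, ← h0, add_zero]
    exact norm_nonneg _
  · have hle : φ (x + y) ≤ ‖x‖ * ‖x + y‖ :=
      hnx ▸ (le_abs_self _).trans (φ.le_opNorm (x + y))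
    rw [map_add, hφx, hφy, ← hxy] at hle
    rw [← hxy]
    nlinarith

/-- A functional norming the sum of two unit vectors whose sum has norm `2` norms both of them. -/
theorem exists_mem_dualityMap_of_norm_add_eq_two {B : Type*} [NormedAddCommGroup B]
    [NormedSpace ℝ B] {x y : B} (hx : ‖x‖ = 1) (hy : ‖y‖ = 1) (hxy : ‖x + y‖ = 2) :
    (dualityMap x ∩ dualityMap y).Nonempty := by
  obtain ⟨g, hg, hgxy⟩ := exists_dual_vector ℝ (x + y) (by rw [hxy]; exact two_ne_zero)
  have hsum : g x + g y = 2 := by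
    rw [← map_add, hgxy, hxy]
    rfl
  have hgx : g x ≤ 1 := by simpa [hg, hx] using (le_abs_self _).trans (g.le_opNorm x)
  have hgy : g y ≤ 1 := by simpa [hg, hy] using (le_abs_self _).trans (g.le_opNorm y)
  exact ⟨g, ⟨by rw [hx]; linarith, hg.trans hx.symm⟩, ⟨by rw [hy]; linarith, hg.trans hy.symm⟩⟩

theorem statement_13 {B : Type*} [NormedAddCommGroup B] [NormedSpace ℝ B] [CompleteSpace B] :
    StrictConvexSpace ℝ B ↔ ∀ x : B, genIdentical x = {x} := by
  constructor
  · intro _ x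
    refine Subset.antisymm ?_ ?_
    · rintro y ⟨φ, hx, hy⟩
      exact (eq_of_norm_eq_of_norm_add_eq (hx.2.symm.trans hy.2)
        (norm_add_eq_of_mem_dualityMap hx hy)).symm
    · rw [singleton_subset_iff]
      obtain ⟨φ, hφ⟩ := dualityMap_nonempty x
      exact ⟨φ, hφ, hφ⟩
  · intro h
    refine StrictConvexSpace.of_norm_add_ne_two fun x y hx hy hne hxy => hne ?_
    have hmem : y ∈ genIdentical x := exists_mem_dualityMap_of_norm_add_eq_two hx hy hxy
    rw [h x] at hmem
    exact hmem.symm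
end
end

section
/- Let B be a real Banach space and let C be a nonempty subset of B. Then: (a) Π_C(x) ⊇ 𝓙(x) ∩ C for every x ∈ B; and (b) for every x ∈ C, Π_C(x) = 𝓙(x) ∩ C and x ∈ Π_C(x). -/
open Set Filter

noncomputable section

theorem lyapV_eq_zero_iff {B : Type*} [NormedAddCommGroup B] [NormedSpace ℝ B]
    {φ : B →L[ℝ] ℝ} {x : B} : lyapV φ x = 0 ↔ φ ∈ dualityMap x := by
  constructor
  · intro h0
    have h : φ x ≤ ‖φ‖ * ‖x‖ := (Real.le_norm_self _).trans (φ.le_opNorm x)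
    unfold lyapV at h0
    have hn : ‖φ‖ = ‖x‖ := by
      have : (‖φ‖ - ‖x‖) ^ 2 = 0 := le_antisymm (by nlinarith) (sq_nonneg _)
      exact sub_eq_zero.mp (pow_eq_zero_iff two_ne_zero |>.mp this)
    refine ⟨?_, hn⟩
    rw [hn] at h0
    linarith
  · rintro ⟨h1, h2⟩
    rw [lyapV, h1, h2]
    ring

theorem genIdentical_inter_subset_genMetricProj {B : Type*} [NormedAddCommGroup B]
    [NormedSpace ℝ B] (C : Set B) (x : B) : genIdentical x ∩ C ⊆ genMetricProj C x := by
  rintro y ⟨⟨φ, hφx, hφy⟩, hy⟩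
  refine mem_iUnion₂.mpr ⟨φ, hφx, hy, fun z _ => ?_⟩
  rw [lyapV_eq_zero_iff.mpr hφy]
  exact lyapV_nonneg φ z

theorem genMetricProj_subset_genIdentical_inter {B : Type*} [NormedAddCommGroup B]
    [NormedSpace ℝ B] {C : Set B} {x : B} (hx : x ∈ C) :
    genMetricProj C x ⊆ genIdentical x ∩ C := by
  intro y hy
  obtain ⟨φ, hφ, hyC, hmin⟩ := mem_iUnion₂.mp hy
  have hle : lyapV φ y ≤ 0 := lyapV_eq_zero_iff.mpr hφ ▸ hmin x hx
  exact ⟨⟨φ, hφ, lyapV_eq_zero_iff.mp (le_antisymm hle (lyapV_nonneg φ y))⟩, hyC⟩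

theorem statement_14 {B : Type*} [NormedAddCommGroup B] [NormedSpace ℝ B] [CompleteSpace B]
    (C : Set B) (hC : C.Nonempty) :
    (∀ x : B, genIdentical x ∩ C ⊆ genMetricProj C x) ∧
      (∀ x ∈ C, genMetricProj C x = genIdentical x ∩ C ∧ x ∈ genMetricProj C x) := by
  refine ⟨genIdentical_inter_subset_genMetricProj C, fun x hx => ⟨?_, ?_⟩⟩
  · exact (genMetricProj_subset_genIdentical_inter hx).antisymm
      (genIdentical_inter_subset_genMetricProj C x)
  · obtain ⟨φ, hφ⟩ := dualityMap_nonempty x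
    exact genIdentical_inter_subset_genMetricProj C x ⟨⟨φ, hφ, hφ⟩, hx⟩
end
end

section
/- Let r > 0 and let g = (g₁, g₂, …) be an absolutely summable real sequence with gₙ ≥ 0 for all n, ∑_{n≥1} gₙ = r, and such that the set {n : gₙ > 0} is infinite. For a real sequence s = (s₁, s₂, …) with sₙ → 0, define V(g, s) = r² − 2 ∑_{n≥1} gₙ sₙ + (sup_{n≥1} |sₙ|)². Then V(g, s) > 0 for every such sequence s, while inf { V(g, s) : s a real sequence with sₙ → 0 } = 0. In particular, the infimum is not attained (π_{c₀}(g) = ∅). -/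
open Filter

noncomputable section

/-- A null sequence indexed by the positive integers is bounded. -/
lemma bddAbove_range_abs_of_tendsto_zero {s : ℕ+ → ℝ} (hs : Tendsto s atTop (nhds 0)) :
    BddAbove (Set.range fun n => |s n|) := by
  have hle : (cofinite : Filter ℕ+) ≤ atTop := by
    refine le_iInf fun N => ?_
    rw [le_principal_iff, mem_cofinite, Set.compl_Ici]
    exact Set.finite_Iio N
  exact (hs.abs.mono_left hle).bddAbove_range_of_cofinite

/-- If a nonnegative summable `g` has infinitely many positive entries, no nonzero null sequence
attains equality in Hölder's inequality against `g`. -/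
lemma tsum_mul_lt_of_tendsto_zero {r : ℝ} {g s : ℕ+ → ℝ} (hg0 : ∀ n, 0 ≤ g n)
    (hgsum : HasSum g r) (hginf : {n : ℕ+ | 0 < g n}.Infinite)
    (hs : Tendsto s atTop (nhds 0)) (hM : 0 < ⨆ n, |s n|) :
    ∑' n, g n * s n < r * ⨆ n, |s n| := by
  have hle : ∀ n, |s n| ≤ ⨆ n, |s n| := le_ciSup (bddAbove_range_abs_of_tendsto_zero hs)
  set M := ⨆ n, |s n|
  have hsumM : HasSum (fun n => g n * M) (r * M) := hgsum.mul_right M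
  have hsum : Summable fun n => g n * s n := by
    refine Summable.of_norm_bounded hsumM.summable fun n => ?_
    rw [norm_mul, Real.norm_of_nonneg (hg0 n), Real.norm_eq_abs]
    exact mul_le_mul_of_nonneg_left (hle n) (hg0 n)
  obtain ⟨N, hN⟩ := eventually_atTop.1 (hs.eventually_lt_const hM)
  obtain ⟨n, hn, hNn⟩ := hginf.exists_gt N
  rw [← hsumM.tsum_eq]
  exact hsum.tsum_lt_tsum (i := n)
    (fun k => mul_le_mul_of_nonneg_left ((le_abs_self _).trans (hle k)) (hg0 k))
    (mul_lt_mul_of_pos_left (hN n hNn.le) hn) hsumM.summable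

/-- The functional `V(g, ·)` takes arbitrarily small values on finitely supported sequences. -/
lemma exists_tendsto_zero_functional_lt {r : ℝ} (hr : 0 < r) {g : ℕ+ → ℝ}
    (hgsum : HasSum g r) {ε : ℝ} (hε : 0 < ε) :
    ∃ s : ℕ+ → ℝ, Tendsto s atTop (nhds 0) ∧
      r ^ 2 - 2 * (∑' n, g n * s n) + (⨆ n, |s n|) ^ 2 < ε := by
  classical
  have hlt : r - ε / (2 * r) < r := sub_lt_self _ (by positivity)
  obtain ⟨F, hF⟩ := (Tendsto.eventually_const_lt hlt hgsum).exists
  refine ⟨fun n => if n ∈ F then r else 0, ?_, ?_⟩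
  · refine tendsto_const_nhds.congr' ?_
    filter_upwards [atTop_le_cofinite F.finite_toSet.compl_mem_cofinite] with n hn
    exact (if_neg hn).symm
  · have hpair : ∑' n, g n * (if n ∈ F then r else 0) = (∑ n ∈ F, g n) * r := by
      rw [tsum_eq_sum (s := F) fun n hn => by simp [hn], Finset.sum_mul]
      exact Finset.sum_congr rfl fun n hn => by rw [if_pos hn]
    have hsup : (⨆ n : ℕ+, |if n ∈ F then r else 0|) ≤ r :=
      ciSup_le fun n => by split_ifs <;> simp [abs_of_pos hr, hr.le]
    have hsup0 : 0 ≤ ⨆ n : ℕ+, |if n ∈ F then r else 0| :=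
      Real.iSup_nonneg fun n => abs_nonneg _
    rw [hpair]
    have hsq := pow_le_pow_left₀ hsup0 hsup 2
    have hmul := mul_lt_mul_of_pos_right hF (show 0 < 2 * r by positivity)
    rw [sub_mul, div_mul_cancel₀ ε (by positivity)] at hmul
    linarith

/-- Let `g ∈ ℓ¹` have nonnegative entries summing to `r > 0`, with infinitely many
positive entries. For null sequences `s` (elements of `c₀`), the functional
`V(g,s) = r² - 2⟨g,s⟩ + ‖s‖∞²` is strictly positive, yet its infimum over `c₀` is `0`;
in particular `π_{c₀}(g) = ∅`. -/
theorem statement_16 (r : ℝ) (hr : 0 < r) (g : ℕ+ → ℝ) (hg0 : ∀ n, 0 ≤ g n)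
    (hgsum : HasSum g r) (hginf : {n : ℕ+ | 0 < g n}.Infinite) :
    (∀ s : ℕ+ → ℝ, Tendsto s atTop (nhds 0) →
        0 < r ^ 2 - 2 * (∑' n, g n * s n) + (⨆ n, |s n|) ^ 2) ∧
      sInf {v : ℝ | ∃ s : ℕ+ → ℝ, Tendsto s atTop (nhds 0) ∧
          v = r ^ 2 - 2 * (∑' n, g n * s n) + (⨆ n, |s n|) ^ 2} = 0 := by
  have hpos : ∀ s : ℕ+ → ℝ, Tendsto s atTop (nhds 0) →
      0 < r ^ 2 - 2 * (∑' n, g n * s n) + (⨆ n, |s n|) ^ 2 := by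
    intro s hs
    rcases (Real.iSup_nonneg fun n => abs_nonneg (s n)).eq_or_lt with hM | hM
    · have hzero : ∀ n, s n = 0 := fun n => abs_nonpos_iff.1 <|
        hM ▸ le_ciSup (bddAbove_range_abs_of_tendsto_zero hs) n
      simp [hzero, hr]
    · linarith [tsum_mul_lt_of_tendsto_zero hg0 hgsum hginf hs hM,
        sq_nonneg (r - ⨆ n, |s n|), sub_sq r (⨆ n, |s n|)]
  refine ⟨hpos, csInf_eq_of_forall_ge_of_forall_gt_exists_lt ⟨_, 0, tendsto_const_nhds, rfl⟩ ?_ ?_⟩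
  · rintro v ⟨s, hs, rfl⟩
    exact (hpos s hs).le
  · intro ε hε
    obtain ⟨s, hs, hlt⟩ := exists_tendsto_zero_functional_lt hr hgsum hε
    exact ⟨_, ⟨s, hs, rfl⟩, hlt⟩
end
end
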